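/- arXiv:0803.1519 — 5 statements merged into one kernel-verified Lean document; each statement's English description precedes it below -/
import Mathlib

section
/- Let k be a totally real number field in which the rational prime 2 is unramified (equivalently, 2 does not divide the discriminant of k), and let K = k(i) be the totally imaginary quadratic extension of k obtained by adjoining a square root i of −1. Then every unit ε of the ring of integers R_K satisfies N_{K/k}(ε) = η² for some unit η of the ring of integers R_k; in other words, the index |R_K^* : R_K^{*(2)}| = 1, where R_K^{*(2)} = { x ∈ R_K^* : N_{K/k}(x) ∈ (R_k^*)² }. -/
open NumberField

/-!
Write `x̄` for the conjugate of `x ∈ K` over the totally real field `k`, and `μ` for the group of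
roots of unity of `K`. By Kronecker's theorem `v ↦ v / v̄` maps the units of `K` to `μ`, and the
Hasse unit index of `K` over `k` is `2` if this map is onto and `1` otherwise.

If the index is `1`, every unit is `η ζ` with `η` a unit of `k` and `ζ ∈ μ`, and its norm is
`η² · ζ ζ̄ = η²`. If it is `2`, some unit `v` satisfies `v / v̄ = i`; then `v² + v̄² = 0`, so
`Tr(v)² = (v + v̄)² = 2 v v̄ = 2 N(v)`, and the ideal `(2)` of `k` is the square of a principal
ideal. This is impossible when `2` is unramified in `k`.
-/

section QuadraticExtension

variable {F K : Type*} [Field F] [Field K] [Algebra F K] [Algebra.IsQuadraticExtension F K]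
  {σ : Gal(K/F)}

lemma card_gal_eq_two_of_ne_one (hσ : σ ≠ 1) : Nat.card Gal(K/F) = 2 := by
  have : Nontrivial Gal(K/F) := ⟨σ, 1, hσ⟩
  refine le_antisymm ?_ (Finite.one_lt_card (α := Gal(K/F)))
  rw [Nat.card_eq_fintype_card, ← Algebra.IsQuadraticExtension.finrank_eq_two F K]
  exact AlgEquiv.card_le

lemma isGalois_of_gal_ne_one (hσ : σ ≠ 1) : IsGalois F K :=
  .of_card_aut_eq_finrank F K <| by
    rw [card_gal_eq_two_of_ne_one hσ, Algebra.IsQuadraticExtension.finrank_eq_two]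

lemma univ_gal_eq_pair [DecidableEq Gal(K/F)] (hσ : σ ≠ 1) :
    (Finset.univ : Finset Gal(K/F)) = {1, σ} := by
  refine (Finset.eq_univ_of_card _ ?_).symm
  rw [Finset.card_pair hσ.symm, ← Nat.card_eq_fintype_card, card_gal_eq_two_of_ne_one hσ]

lemma algebraMap_norm_eq_mul (hσ : σ ≠ 1) (x : K) :
    algebraMap F K (Algebra.norm F x) = x * σ x := by
  classical
  have := isGalois_of_gal_ne_one hσ
  rw [Algebra.norm_eq_prod_automorphisms, univ_gal_eq_pair hσ, Finset.prod_pair hσ.symm,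
    AlgEquiv.one_apply]

lemma algebraMap_trace_eq_add (hσ : σ ≠ 1) (x : K) :
    algebraMap F K (Algebra.trace F K x) = x + σ x := by
  classical
  have := isGalois_of_gal_ne_one hσ
  rw [trace_eq_sum_automorphisms, univ_gal_eq_pair hσ, Finset.sum_pair hσ.symm,
    AlgEquiv.one_apply]

end QuadraticExtension

section Embeddings

variable {K : Type*} [Field K]

lemma isTotallyReal_of_forall_im_eq_zero (h : ∀ (φ : K →+* ℂ) (x : K), (φ x).im = 0) :
    IsTotallyReal K where
  isReal v := InfinitePlace.isReal_iff.mpr <| RingHom.ext fun x ↦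
    Complex.conj_eq_iff_im.mpr (h v.embedding x)

lemma isTotallyComplex_of_sq_eq_neg_one {i : K} (hi : i ^ 2 = -1) : IsTotallyComplex K where
  isComplex v := by
    refine InfinitePlace.isComplex_iff.mpr fun hreal ↦ ?_
    have him : (v.embedding i).im = 0 := Complex.conj_eq_iff_im.mp (RingHom.congr_fun hreal i)
    have hre := congrArg (fun x ↦ (v.embedding x).re) hi
    simp only [pow_two, map_mul, map_neg, map_one, Complex.neg_re, Complex.one_re,
      Complex.mul_re, him] at hre
    nlinarith [mul_self_nonneg (v.embedding i).re]

end Embeddings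

lemma exists_torsion_coe_eq_of_pow_eq_one {K : Type*} [Field K] {x : K} {n : ℕ} (hn : n ≠ 0)
    (hx : x ^ n = 1) : ∃ ζ : Units.torsion K, ((ζ : (𝓞 K)ˣ) : K) = x := by
  have hint : IsIntegral ℤ x := .of_pow hn.pos (hx ▸ isIntegral_one)
  have hpow : (⟨x, hint⟩ : 𝓞 K) ^ n = 1 := RingOfIntegers.ext hx
  refine ⟨⟨Units.ofPowEqOne _ n hpow hn, ?_⟩, rfl⟩
  exact isOfFinOrder_iff_pow_eq_one.mpr ⟨n, hn.pos, Units.pow_ofPowEqOne hpow hn⟩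

lemma squarefree_of_not_dvd_discr {k : Type*} [Field k] [NumberField k] {p : ℤ} (hp : Prime p)
    (h : ¬ p ∣ discr k) : Squarefree (p : 𝓞 k) := by
  intro d hd
  by_contra hunit
  obtain ⟨P, hP, hdP⟩ := exists_max_ideal_of_mem_nonunits hunit
  have hpP : (p : 𝓞 k) ∈ P ^ 2 := by
    rw [pow_two]
    exact Ideal.mem_of_dvd _ hd (Ideal.mul_mem_mul hdP hdP)
  have hunram : Algebra.IsUnramifiedAt ℤ P :=
    (not_dvd_discr_iff_forall_mem k (𝓞 k) hp).mp h P hP.isPrime (Ideal.pow_le_self two_ne_zero hpP)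
  have : (Ideal.span {p}).IsMaximal :=
    PrincipalIdealRing.isMaximal_of_irreducible hp.irreducible
  have hdvd : P ^ 2 ∣ (Ideal.span {p}).map (algebraMap ℤ (𝓞 k)) := by
    rwa [Ideal.map_span, Set.image_singleton, Ideal.dvd_span_singleton, eq_intCast]
  refine not_dvd_differentIdeal_iff.mpr hunram ?_
  simpa only [Nat.add_one_sub_one, pow_one] using
    pow_sub_one_dvd_differentIdeal ℤ P 2 (by simpa using hp.ne_zero) hdvd

lemma not_associated_sq_of_not_dvd_discr {k : Type*} [Field k] [NumberField k] {p : ℤ}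
    (hp : Prime p) (h : ¬ p ∣ discr k) (a : 𝓞 k) : ¬ Associated (a ^ 2) (p : 𝓞 k) := by
  intro ha
  have ha_unit : IsUnit a := squarefree_of_not_dvd_discr hp h a (pow_two a ▸ ha.dvd)
  have hp_unit : IsUnit (algebraMap ℤ (𝓞 k) p) := ha.isUnit (ha_unit.pow 2)
  exact hp.not_isUnit (isUnit_of_map_unit _ _ hp_unit)

section CMField

open NumberField.IsCMField

variable {F K : Type*} [Field F] [IsTotallyReal F] [Field K] [NumberField K]
  [Algebra F K] [Algebra.IsQuadraticExtension F K] [IsCMField K]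

variable (F K) in
lemma exists_gal_eq_complexConj : ∃ σ : Gal(K/F), σ ≠ 1 ∧ ∀ x, σ x = complexConj K x := by
  have hcomm (a : F) : complexConj K (algebraMap F K a) = algebraMap F K a := by
    rw [← CMExtension.equivMaximalRealSubfield_apply, complexConj_apply_eq_self]
  refine ⟨.ofRingEquiv (f := (complexConj K).toRingEquiv) hcomm, fun h ↦ ?_, fun _ ↦ rfl⟩
  exact complexConj_ne_one K (AlgEquiv.ext fun x ↦ DFunLike.congr_fun h x)

lemma algebraMap_norm_eq_mul_complexConj (x : K) :
    algebraMap F K (Algebra.norm F x) = x * complexConj K x := by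
  obtain ⟨σ, hσ, hconj⟩ := exists_gal_eq_complexConj F K
  rw [algebraMap_norm_eq_mul hσ, hconj]

lemma algebraMap_trace_eq_add_complexConj (x : K) :
    algebraMap F K (Algebra.trace F K x) = x + complexConj K x := by
  obtain ⟨σ, hσ, hconj⟩ := exists_gal_eq_complexConj F K
  rw [algebraMap_trace_eq_add hσ, hconj]

lemma norm_torsion_eq_one (ζ : Units.torsion K) :
    RingOfIntegers.norm F ((ζ : (𝓞 K)ˣ) : 𝓞 K) = 1 := by
  apply RingOfIntegers.ext
  apply (algebraMap F K).injective
  rw [RingOfIntegers.coe_norm, algebraMap_norm_eq_mul_complexConj, complexConj_torsion]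
  simp

lemma exists_unit_algebraMap_eq_of_mem_realUnits {u : (𝓞 K)ˣ} (hu : u ∈ realUnits K) :
    ∃ η : (𝓞 F)ˣ, algebraMap (𝓞 F) (𝓞 K) η = u := by
  obtain ⟨v, hv⟩ := (mem_realUnits_iff K u).mp hu
  let e := RingOfIntegers.mapRingEquiv (CMExtension.equivMaximalRealSubfield F K).symm
  refine ⟨Units.mapEquiv e.toMulEquiv v, RingOfIntegers.ext ?_⟩
  rw [← hv]
  exact CMExtension.algebraMap_equivMaximalRealSubfield_symm_apply F K _

lemma exists_norm_eq_sq_of_indexRealUnits_eq_one (h : indexRealUnits K = 1) (ε : (𝓞 K)ˣ) :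
    ∃ η : (𝓞 F)ˣ, RingOfIntegers.norm F (ε : 𝓞 K) = (η : 𝓞 F) ^ 2 := by
  have hε : ε ∈ realUnits K ⊔ Units.torsion K := Subgroup.index_eq_one.mp h ▸ Subgroup.mem_top ε
  obtain ⟨u, hu, ζ, hζ, rfl⟩ := Subgroup.mem_sup.mp hε
  obtain ⟨η, hη⟩ := exists_unit_algebraMap_eq_of_mem_realUnits (F := F) hu
  refine ⟨η, ?_⟩
  rw [Units.val_mul, map_mul, norm_torsion_eq_one ⟨ζ, hζ⟩, mul_one, ← hη,
    RingOfIntegers.norm_algebraMap, Algebra.IsQuadraticExtension.finrank_eq_two]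

lemma unitsMulComplexConjInv_surjective (h : indexRealUnits K = 2) :
    Function.Surjective (unitsMulComplexConjInv K) := by
  obtain ⟨u, hu⟩ := (indexRealUnits_eq_two_iff K).mp h
  intro ζ
  obtain ⟨n, rfl⟩ := Subgroup.mem_zpowers_iff.mp (hu ▸ Subgroup.mem_top ζ)
  exact ⟨u ^ n, map_zpow _ u n⟩

lemma coe_eq_unitsMulComplexConjInv_mul (v : (𝓞 K)ˣ) :
    (v : K) = ((unitsMulComplexConjInv K v : (𝓞 K)ˣ) : K) * complexConj K v := by
  rw [unitsMulComplexConjInv_apply]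
  simp

lemma trace_sq_eq_two_mul_norm {i : K} (hi : i ^ 2 = -1) {v : K} (hv : v = i * complexConj K v) :
    Algebra.trace F K v ^ 2 = 2 * Algebra.norm F v := by
  apply (algebraMap F K).injective
  rw [map_pow, map_mul, map_ofNat, algebraMap_trace_eq_add_complexConj,
    algebraMap_norm_eq_mul_complexConj]
  linear_combination (v + i * complexConj K v) * hv + complexConj K v ^ 2 * hi

lemma exists_sq_associated_two {i : K} (hi : i ^ 2 = -1) {v : (𝓞 K)ˣ}
    (hv : (v : K) = i * complexConj K v) : ∃ a : 𝓞 F, Associated (a ^ 2) 2 := by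
  let a : 𝓞 F := ⟨Algebra.trace F K v, Algebra.isIntegral_trace (v : 𝓞 K).isIntegral_coe⟩
  have ha : a ^ 2 = 2 * RingOfIntegers.norm F (v : 𝓞 K) :=
    RingOfIntegers.ext (trace_sq_eq_two_mul_norm hi hv)
  exact ⟨a, .symm ⟨Units.map (RingOfIntegers.norm F) v, ha.symm⟩⟩

lemma indexRealUnits_eq_one_of_forall_not_associated {i : K} (hi : i ^ 2 = -1)
    (h2 : ∀ a : 𝓞 F, ¬ Associated (a ^ 2) 2) : indexRealUnits K = 1 := by
  refine (indexRealUnits_eq_one_or_two K).resolve_right fun hindex ↦ ?_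
  obtain ⟨ζ, rfl⟩ := exists_torsion_coe_eq_of_pow_eq_one four_ne_zero
    (show i ^ 4 = 1 by linear_combination (i ^ 2 - 1) * hi)
  obtain ⟨v, rfl⟩ := unitsMulComplexConjInv_surjective hindex ζ
  obtain ⟨a, ha⟩ := exists_sq_associated_two (F := F) hi (coe_eq_unitsMulComplexConjInv_mul v)
  exact h2 a ha

end CMField

theorem units_norm_sq_adjoin_i_general
    {k K : Type*} [Field k] [IsTotallyReal k] [Field K] [NumberField K]
    [Algebra k K] [Algebra.IsQuadraticExtension k K] {i : K} (hi : i ^ 2 = -1)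
    (h2 : ∀ a : 𝓞 k, ¬ Associated (a ^ 2) 2) (ε : (𝓞 K)ˣ) :
    ∃ η : (𝓞 k)ˣ, RingOfIntegers.norm k (ε : 𝓞 K) = (η : 𝓞 k) ^ 2 := by
  have : IsTotallyComplex K := isTotallyComplex_of_sq_eq_neg_one hi
  have : IsCMField K := .ofCMExtension k K
  exact exists_norm_eq_sq_of_indexRealUnits_eq_one
    (indexRealUnits_eq_one_of_forall_not_associated hi h2) ε

/-- Let `k` be a totally real number field in which 2 is unramified (2 does not divide the
discriminant of `k`), and let `K = k(i)` be the quadratic extension obtained by adjoining a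
square root `i` of `-1`.  Then every unit `ε` of `𝓞 K` satisfies `N_{K/k}(ε) = η ^ 2` for some
unit `η` of `𝓞 k`. -/
theorem units_norm_sq_adjoin_i
    (k K : Type*) [Field k] [NumberField k] [Field K] [NumberField K] [Algebra k K]
    (htr : ∀ φ : k →+* ℂ, ∀ x : k, (φ x).im = 0)
    (h2 : ¬ ((2 : ℤ) ∣ NumberField.discr k))
    (i : K) (hi : i ^ 2 = -1)
    (hgen : Algebra.adjoin k ({i} : Set K) = ⊤)
    (hdeg : Module.finrank k K = 2) :
    ∀ ε : (𝓞 K)ˣ, ∃ η : (𝓞 k)ˣ,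
      RingOfIntegers.norm k (ε : 𝓞 K) = (η : 𝓞 k) ^ 2 := by
  have : IsTotallyReal k := isTotallyReal_of_forall_im_eq_zero htr
  have : Algebra.IsQuadraticExtension k K := ⟨hdeg⟩
  exact units_norm_sq_adjoin_i_general hi fun a ↦
    mod_cast not_associated_sq_of_not_dvd_discr Int.prime_two h2 a
end

section
/- Let k be a number field with ring of integers R, let a, b ∈ R, and let A = (a,b / k) be the quaternion algebra over k with basis 1, i, j, ij satisfying i² = a, j² = b, ij = −ji. Let x₀, x₁, x₂ ∈ R satisfy x₀² − a·x₁² − b·x₂² ∈ 4R, and set β = (1/2)(x₀ + x₁·i + x₂·j) ∈ A. Then the R-submodule O of A spanned by {1, i, β, i·β} is closed under multiplication (hence is a subring of A containing 1), and every element of O is integral over R (its reduced trace and reduced norm lie in R). -/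
open NumberField Quaternion

/-! Write `S = R + R i` and `T = R + R β`, so that the span in question is the product `S T`. From
`β² = x₀ β - n`, with `4 n = x₀² - a x₁² - b x₂²`, and `β i = a x₁ + x₀ i - i β` one reads off
`T T ⊆ T` and `T S ⊆ S T`, hence `(S T) (S T) = S (T S) T ⊆ (S S) (T T) ⊆ S T`.

Being a finitely generated module, the ring `S T` then consists of integral elements. If `x` is
integral, so is its conjugate, which commutes with `x`; therefore the trace `x + star x` and the
norm `x * star x` are integral too. -/

section ProductOfSubmodules

theorem mul_mul_self_le_of_swap_le {M : Type*} [Semigroup M] [Preorder M]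
    [MulLeftMono M] [MulRightMono M] {s t : M} (hs : s * s ≤ s) (ht : t * t ≤ t)
    (hts : t * s ≤ s * t) : s * t * (s * t) ≤ s * t :=
  calc
    s * t * (s * t) = s * (t * s) * t := by simp only [mul_assoc]
    _ ≤ s * (s * t) * t := by gcongr
    _ = s * s * (t * t) := by simp only [mul_assoc]
    _ ≤ s * t := mul_le_mul' hs ht

variable {R A : Type*} [CommSemiring R] [Semiring A] [Algebra R A]

theorem span_one_pair_mul_span_one_pair (u v : A) :
    Submodule.span R {1, u} * Submodule.span R {1, v} = Submodule.span R {1, u, v, u * v} := by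
  rw [Submodule.span_mul_span]
  congr 1
  ext x
  simp only [Set.mem_mul, Set.mem_insert_iff, Set.mem_singleton_iff]
  aesop

variable {u v : A}

theorem span_one_pair_mul_self_le (hu : u * u ∈ Submodule.span R {1, u}) :
    Submodule.span R {1, u} * Submodule.span R {1, u} ≤ Submodule.span R {1, u} := by
  rw [span_one_pair_mul_span_one_pair, Submodule.span_le]
  have h_one : 1 ∈ Submodule.span R {1, u} := Submodule.mem_span_of_mem (by simp)
  have h_gen : u ∈ Submodule.span R {1, u} := Submodule.mem_span_of_mem (by simp)
  simp [Set.insert_subset_iff, h_one, h_gen, hu]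

theorem mul_mem_span_one_pair_mul (hu : u * u ∈ Submodule.span R {1, u})
    (hv : v * v ∈ Submodule.span R {1, v}) (hvu : v * u ∈ Submodule.span R {1, u, v, u * v})
    {x y : A} (hx : x ∈ Submodule.span R {1, u, v, u * v})
    (hy : y ∈ Submodule.span R {1, u, v, u * v}) :
    x * y ∈ Submodule.span R {1, u, v, u * v} := by
  have h_swap : Submodule.span R {1, v} * Submodule.span R {1, u} ≤
      Submodule.span R {1, u} * Submodule.span R {1, v} := by
    rw [span_one_pair_mul_span_one_pair, span_one_pair_mul_span_one_pair, Submodule.span_le]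
    have h_gen : ∀ z ∈ ({1, v, u} : Set A), z ∈ Submodule.span R {1, u, v, u * v} :=
      fun z hz ↦ Submodule.mem_span_of_mem (by aesop)
    simp_all [Set.insert_subset_iff]
  rw [← span_one_pair_mul_span_one_pair] at hx hy ⊢
  exact mul_mul_self_le_of_swap_le (span_one_pair_mul_self_le hu) (span_one_pair_mul_self_le hv)
    h_swap (Submodule.mul_mem_mul hx hy)

end ProductOfSubmodules

section Integrality

variable {R A : Type*} [CommRing R] [Ring A] [Algebra R A] {x : A}

theorem isIntegral_of_mem_of_mul_mem {O : Submodule R A} (h_fg : O.FG) (h_one : 1 ∈ O)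
    (h_mul : ∀ x ∈ O, ∀ y ∈ O, x * y ∈ O) (hx : x ∈ O) : IsIntegral R x :=
  .of_mem_of_fg (O.toSubalgebra h_one fun x y hx hy ↦ h_mul x hx y hy) (by simpa using h_fg) x hx

open scoped IsMulCommutative in
theorem isIntegral_of_mem_adjoin_of_commute {s : Set A} (hs : ∀ z ∈ s, IsIntegral R z)
    (h_comm : ∀ z ∈ s, ∀ w ∈ s, z * w = w * z) (hx : x ∈ Algebra.adjoin R s) :
    IsIntegral R x := by
  let B := Algebra.adjoin R s
  have : IsMulCommutative B := Algebra.isMulCommutative_adjoin R h_comm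
  have isIntegral_coe_iff (z : B) : IsIntegral R (z : A) ↔ IsIntegral R z :=
    isIntegral_algHom_iff B.val Subtype.val_injective
  suffices IsIntegral R (⟨x, hx⟩ : B) from (isIntegral_coe_iff _).2 this
  induction hx using Algebra.adjoin_induction with
  | mem z hz => exact (isIntegral_coe_iff _).1 (hs z hz)
  | algebraMap r => exact isIntegral_algebraMap (A := B)
  | add _ _ _ _ hz hw => exact hz.add hw
  | mul _ _ _ _ hz hw => exact hz.mul hw

theorem isIntegral_op_iff : IsIntegral R (MulOpposite.op x) ↔ IsIntegral R x := by
  simp only [IsIntegral, RingHom.IsIntegralElem, ← Polynomial.aeval_def,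
    Polynomial.aeval_op_apply, MulOpposite.op_eq_zero_iff]

variable {S : Type*} [CommRing S] [Algebra R S] {c₁ c₂ c₃ : S} {z : ℍ[S,c₁,c₂,c₃]}

theorem isIntegral_quaternionAlgebra_star (hz : IsIntegral R z) : IsIntegral R (star z) :=
  isIntegral_op_iff.1 (hz.map (QuaternionAlgebra.starAe.restrictScalars R))

theorem isIntegral_quaternionAlgebra_coe_iff {s : S} :
    IsIntegral R (s : ℍ[S,c₁,c₂,c₃]) ↔ IsIntegral R s :=
  isIntegral_algHom_iff (IsScalarTower.toAlgHom R S ℍ[S,c₁,c₂,c₃])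
    QuaternionAlgebra.algebraMap_injective

theorem isIntegral_of_mem_adjoin_quaternionAlgebra_star (hz : IsIntegral R z)
    {w : ℍ[S,c₁,c₂,c₃]} (hw : w ∈ Algebra.adjoin R {z, star z}) : IsIntegral R w := by
  refine isIntegral_of_mem_adjoin_of_commute ?_ ?_ hw
  · rintro _ (rfl | rfl)
    exacts [hz, isIntegral_quaternionAlgebra_star hz]
  · rintro _ (rfl | rfl) _ (rfl | rfl)
    exacts [rfl, (star_comm_self' _).symm, star_comm_self' _, rfl]

theorem isIntegral_quaternionAlgebra_trace (hz : IsIntegral R z) :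
    IsIntegral R (2 * z.re + c₂ * z.imI) := by
  rw [← isIntegral_quaternionAlgebra_coe_iff (c₁ := c₁) (c₂ := c₂) (c₃ := c₃),
    ← QuaternionAlgebra.self_add_star']
  exact isIntegral_of_mem_adjoin_quaternionAlgebra_star hz
    (add_mem (Algebra.subset_adjoin (by simp)) (Algebra.subset_adjoin (by simp)))

theorem isIntegral_quaternionAlgebra_norm (hz : IsIntegral R z) :
    IsIntegral R (z * star z).re := by
  rw [← isIntegral_quaternionAlgebra_coe_iff (c₁ := c₁) (c₂ := c₂) (c₃ := c₃),
    ← QuaternionAlgebra.mul_star_eq_coe]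
  exact isIntegral_of_mem_adjoin_quaternionAlgebra_star hz
    (mul_mem (Algebra.subset_adjoin (by simp)) (Algebra.subset_adjoin (by simp)))

end Integrality

section QuaternionRelations

variable {R A : Type*} [CommRing R] [Ring A] [Algebra R A] {a b : R}
  (q : QuaternionAlgebra.Basis A a 0 b)

theorem quaternionBasis_linComb_mul_self (x₀ x₁ x₂ : R) :
    (x₀ • 1 + x₁ • q.i + x₂ • q.j) * (x₀ • 1 + x₁ • q.i + x₂ • q.j) =
      (2 * x₀) • (x₀ • 1 + x₁ • q.i + x₂ • q.j) -
        (x₀ ^ 2 - a * x₁ ^ 2 - b * x₂ ^ 2) • (1 : A) := by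
  simp only [add_mul, mul_add, smul_mul_assoc, mul_smul_comm, one_mul, mul_one, q.i_mul_i,
    q.j_mul_j, q.i_mul_j, q.j_mul_i]
  module

theorem quaternionBasis_linComb_mul_i (x₀ x₁ x₂ : R) :
    (x₀ • 1 + x₁ • q.i + x₂ • q.j) * q.i =
      (2 * (a * x₁)) • 1 + (2 * x₀) • q.i - q.i * (x₀ • 1 + x₁ • q.i + x₂ • q.j) := by
  simp only [add_mul, mul_add, smul_mul_assoc, mul_smul_comm, one_mul, mul_one, q.i_mul_i,
    q.i_mul_j, q.j_mul_i]
  module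

variable {x₀ x₁ x₂ n : R} {β : A}

theorem half_linComb_mul_self (h2 : IsSMulRegular A (2 : R))
    (hβ : (2 : R) • β = x₀ • 1 + x₁ • q.i + x₂ • q.j)
    (hn : n * 4 = x₀ ^ 2 - a * x₁ ^ 2 - b * x₂ ^ 2) : β * β = x₀ • β - n • 1 := by
  refine h2 (h2 ?_)
  calc
    (2 : R) • (2 : R) • (β * β) = ((2 : R) • β) * ((2 : R) • β) := by
      rw [smul_mul_assoc, mul_smul_comm]
    _ = (2 * x₀) • (2 : R) • β - (n * 4) • (1 : A) := by
      rw [hβ, quaternionBasis_linComb_mul_self, hn]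
    _ = (2 : R) • (2 : R) • (x₀ • β - n • 1) := by module

theorem half_linComb_mul_i (h2 : IsSMulRegular A (2 : R))
    (hβ : (2 : R) • β = x₀ • 1 + x₁ • q.i + x₂ • q.j) :
    β * q.i = (a * x₁) • 1 + x₀ • q.i - q.i * β := by
  refine h2 ?_
  calc
    (2 : R) • (β * q.i) = ((2 : R) • β) * q.i := (smul_mul_assoc _ _ _).symm
    _ = (2 * (a * x₁)) • 1 + (2 * x₀) • q.i - q.i * ((2 : R) • β) := by
      rw [hβ, quaternionBasis_linComb_mul_i]
    _ = (2 : R) • ((a * x₁) • 1 + x₀ • q.i - q.i * β) := by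
      rw [mul_smul_comm]
      module

theorem mul_mem_span_one_i_half_linComb (h2 : IsSMulRegular A (2 : R))
    (hβ : (2 : R) • β = x₀ • 1 + x₁ • q.i + x₂ • q.j)
    (h : x₀ ^ 2 - a * x₁ ^ 2 - b * x₂ ^ 2 ∈ Ideal.span {4}) {x y : A}
    (hx : x ∈ Submodule.span R {1, q.i, β, q.i * β})
    (hy : y ∈ Submodule.span R {1, q.i, β, q.i * β}) :
    x * y ∈ Submodule.span R {1, q.i, β, q.i * β} := by
  obtain ⟨n, hn⟩ := Ideal.mem_span_singleton'.mp h
  refine mul_mem_span_one_pair_mul ?_ ?_ ?_ hx hy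
  · exact Submodule.mem_span_pair.2 ⟨a, 0, q.i_mul_i.symm⟩
  · refine Submodule.mem_span_pair.2 ⟨-n, x₀, ?_⟩
    rw [half_linComb_mul_self q h2 hβ hn]
    module
  · rw [half_linComb_mul_i q h2 hβ]
    exact sub_mem (add_mem (Submodule.smul_mem _ _ (Submodule.mem_span_of_mem (by simp)))
      (Submodule.smul_mem _ _ (Submodule.mem_span_of_mem (by simp))))
      (Submodule.mem_span_of_mem (by simp))

end QuaternionRelations

section ScalarExtension

theorem isSMulRegular_quaternionAlgebra {M S : Type*} [SMul M S] {r : M}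
    (hr : IsSMulRegular S r) {c₁ c₂ c₃ : S} : IsSMulRegular ℍ[S,c₁,c₂,c₃] r := fun x y hxy ↦ by
  rw [QuaternionAlgebra.ext_iff] at hxy ⊢
  exact ⟨hr hxy.1, hr hxy.2.1, hr hxy.2.2.1, hr hxy.2.2.2⟩

variable {R K : Type*} [CommRing R] [CommRing K] [Algebra R K]

variable (K) in
/-- The standard generators `i`, `j` of the quaternion algebra over `K` with structure constants
from `R`, as a quaternion basis over `R`. It need not span over `R`: a
`QuaternionAlgebra.Basis` only records the multiplication table. -/
@[simps i j]
def quaternionBasisOver (a b : R) :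
    QuaternionAlgebra.Basis ℍ[K,algebraMap R K a,algebraMap R K b] a 0 b where
  i := ⟨0, 1, 0, 0⟩
  j := ⟨0, 0, 1, 0⟩
  k := ⟨0, 0, 0, 1⟩
  i_mul_i := by ext <;> simp [Algebra.algebraMap_eq_smul_one]
  j_mul_j := by ext <;> simp [Algebra.algebraMap_eq_smul_one]
  i_mul_j := by ext <;> simp
  j_mul_i := by ext <;> simp

theorem quaternion_span_mul_closed_and_integral_general (h2 : IsSMulRegular K (2 : R))
    (a b x₀ x₁ x₂ : R) (h : x₀ ^ 2 - a * x₁ ^ 2 - b * x₂ ^ 2 ∈ Ideal.span {4})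
    (β : ℍ[K,algebraMap R K a,algebraMap R K b])
    (hβ : (2 : R) • β = ⟨algebraMap R K x₀, algebraMap R K x₁, algebraMap R K x₂, 0⟩) :
    let i : ℍ[K,algebraMap R K a,algebraMap R K b] := ⟨0, 1, 0, 0⟩
    let O := Submodule.span R {1, i, β, i * β}
    (∀ x ∈ O, ∀ y ∈ O, x * y ∈ O) ∧
    (∀ x ∈ O, IsIntegral R (2 * x.re) ∧ IsIntegral R (x * star x).re) := by
  intro i O
  let q := quaternionBasisOver K a b
  have hβ' : (2 : R) • β = x₀ • 1 + x₁ • q.i + x₂ • q.j := by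
    rw [hβ]
    ext <;> simp [q, Algebra.algebraMap_eq_smul_one]
  have h_mul : ∀ x ∈ O, ∀ y ∈ O, x * y ∈ O := fun x hx y hy ↦
    mul_mem_span_one_i_half_linComb q (isSMulRegular_quaternionAlgebra h2) hβ' h hx hy
  refine ⟨h_mul, fun x hx ↦ ?_⟩
  have h_fg : O.FG := Submodule.fg_span (Set.toFinite _)
  have h_one : 1 ∈ O := Submodule.mem_span_of_mem (by simp)
  have h_int : IsIntegral R x := isIntegral_of_mem_of_mul_mem h_fg h_one h_mul hx
  exact ⟨by simpa only [zero_mul, add_zero] using isIntegral_quaternionAlgebra_trace h_int,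
    isIntegral_quaternionAlgebra_norm h_int⟩

end ScalarExtension

/-- Let `k` be a number field with ring of integers `R = 𝓞 k`, let `a, b ∈ R`, and let
`A = (a,b / k)` be the quaternion algebra with `i² = a`, `j² = b`, `ij = -ji`.  If
`x₀, x₁, x₂ ∈ R` satisfy `x₀² − a x₁² − b x₂² ∈ 4R` and `β = (1/2)(x₀ + x₁ i + x₂ j)`, then
the `R`-submodule `O` of `A` spanned by `{1, i, β, i β}` is closed under multiplication and
every element of `O` is integral over `R`: its reduced trace `2 x.re` and reduced norm
`(x * star x).re` are integral over `ℤ`, i.e. lie in `R`. -/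
theorem quaternion_span_mul_closed_and_integral
    (k : Type*) [Field k] [NumberField k] (a b : 𝓞 k) (x₀ x₁ x₂ : 𝓞 k)
    (h : x₀ ^ 2 - a * x₁ ^ 2 - b * x₂ ^ 2 ∈ Ideal.span ({4} : Set (𝓞 k))) :
    let i : ℍ[k, (a : k), (b : k)] := ⟨0, 1, 0, 0⟩
    let j : ℍ[k, (a : k), (b : k)] := ⟨0, 0, 1, 0⟩
    let β : ℍ[k, (a : k), (b : k)] :=
      (1 / 2 : k) • (((x₀ : k) : ℍ[k, (a : k), (b : k)]) + (x₁ : k) • i + (x₂ : k) • j)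
    let O : Submodule (𝓞 k) ℍ[k, (a : k), (b : k)] :=
      Submodule.span (𝓞 k) ({1, i, β, i * β} : Set ℍ[k, (a : k), (b : k)])
    (∀ x ∈ O, ∀ y ∈ O, x * y ∈ O) ∧
    (∀ x ∈ O, IsIntegral ℤ (2 * x.re) ∧ IsIntegral ℤ ((x * star x).re)) := by
  intro i j β O
  have hβ : (2 : 𝓞 k) • β = ⟨x₀, x₁, x₂, 0⟩ := by
    ext <;> simp [β, i, j, Algebra.smul_def, map_ofNat (algebraMap (𝓞 k) k) 2]
  exact (quaternion_span_mul_closed_and_integral_general (.of_ne_zero two_ne_zero) a b x₀ x₁ x₂ h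
    β hβ).imp_right fun h_int x hx ↦ (h_int x hx).imp (isIntegral_trans _) (isIntegral_trans _)
end

section
/- Let k be a number field with ring of integers R, let a, b ∈ R, and let A = (a,b / k) be the quaternion algebra over k with basis 1, i, j, ij satisfying i² = a, j² = b, ij = −ji. Let x₀, x₁, x₂ ∈ R satisfy x₀² − a·x₁² − b·x₂² ∈ 4R and suppose in addition that x₂ is a unit of R. Set β = (1/2)(x₀ + x₁·i + x₂·j) ∈ A and let O be the R-submodule of A spanned by {1, i, β, i·β}. Then j ∈ O, so O contains the R-span of {1, i, j, ij}, and the determinant of the 4×4 matrix whose (r,s)-entry is the reduced trace trd(e_r · e_s), for (e₁, e₂, e₃, e₄) = (1, i, β, i·β), generates the principal ideal a²·b²·R of R (it equals a²b²x₂⁴ up to sign, and x₂⁴ is a unit). -/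
open NumberField Quaternion

/-!
Since `i * i = a`, the span `O` of `1, i, β, i * β` is stable under left multiplication by `i`; as
`x₂` is a unit, `j` can be solved for in `2β = x₀ + x₁ i + x₂ j`, so `O` contains `j` and `i * j`.
In the basis `1, i, j, i * j` the trace form is `diag (2, 2a, 2b, -2ab)`, of determinant
`-(4ab)²`, and the coordinates of `1, i, β, i * β` have determinant `(x₂ / 2)²`; hence the
discriminant is `-(4ab)² (x₂ / 2)⁴ = -a² b² x₂⁴`.
-/

section Span

variable {R A : Type*}

theorem mul_mem_span_of_mul_self_mem [CommSemiring R] [Semiring A] [Algebra R A] {i β x : A}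
    (hi : i * i ∈ Submodule.span R {1, i})
    (hx : x ∈ Submodule.span R {1, i, β, i * β}) :
    i * x ∈ Submodule.span R {1, i, β, i * β} := by
  obtain ⟨a, c, hac⟩ := Submodule.mem_span_pair.mp hi
  have hiiβ : i * (i * β) = a • β + c • (i * β) := by
    rw [← mul_assoc, ← hac, add_mul, smul_mul_assoc, smul_mul_assoc, one_mul]
  suffices Submodule.span R {1, i, β, i * β} ≤
      (Submodule.span R {1, i, β, i * β}).comap (LinearMap.mulLeft R i) from this hx
  rw [Submodule.span_le]
  rintro y (rfl | rfl | rfl | rfl) <;>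
    simp only [SetLike.mem_coe, Submodule.mem_comap, LinearMap.mulLeft_apply]
  · exact Submodule.subset_span (by simp)
  · exact Submodule.span_mono (by grind) hi
  · exact Submodule.subset_span (by simp)
  · rw [hiiβ]
    exact add_mem (Submodule.smul_mem _ _ (Submodule.subset_span (by simp)))
      (Submodule.smul_mem _ _ (Submodule.subset_span (by simp)))

theorem span_le_span_of_mul_self_mem [CommSemiring R] [Semiring A] [Algebra R A] {i j β : A}
    (hi : i * i ∈ Submodule.span R {1, i})
    (hj : j ∈ Submodule.span R {1, i, β, i * β}) :
    Submodule.span R {1, i, j, i * j} ≤ Submodule.span R {1, i, β, i * β} := by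
  rw [Submodule.span_le]
  rintro y (rfl | rfl | rfl | rfl)
  · exact Submodule.subset_span (by simp)
  · exact Submodule.subset_span (by simp)
  · exact hj
  · exact mul_mem_span_of_mul_self_mem hi hj

theorem mem_span_triple_of_smul_eq [Ring R] [AddCommGroup A] [Module R A] {c x₀ x₁ x₂ : R}
    {u i j β : A} (hx₂ : IsUnit x₂) (h : c • β = x₀ • u + x₁ • i + x₂ • j) :
    j ∈ Submodule.span R {u, i, β} := by
  rw [← Submodule.smul_mem_iff_of_isUnit _ hx₂]
  refine Submodule.mem_span_triple.mpr ⟨-x₀, -x₁, c, ?_⟩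
  rw [h, neg_smul, neg_smul]
  abel

end Span

theorem gram_eq_transpose_mul_toMatrix_mul {R M ι κ : Type*} [CommSemiring R] [AddCommMonoid M]
    [Module R M] [Fintype ι] [DecidableEq ι] (B : LinearMap.BilinForm R M)
    (b : Module.Basis ι R M) (v : κ → M) :
    Matrix.of (fun r s => B (v r) (v s)) =
      (b.toMatrix v).transpose * LinearMap.BilinForm.toMatrix b B * b.toMatrix v := by
  ext r s
  rw [Matrix.of_apply, B.apply_eq_dotProduct_toMatrix_mulVec b, Matrix.mul_assoc]
  rfl

theorem det_fin_four_of_blockTriangular {R : Type*} [CommRing R]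
    (a₁₁ a₁₂ a₂₁ a₂₂ b₁₁ b₁₂ b₂₁ b₂₂ d₁₁ d₁₂ d₂₁ d₂₂ : R) :
    !![a₁₁, a₁₂, b₁₁, b₁₂;
       a₂₁, a₂₂, b₂₁, b₂₂;
       0, 0, d₁₁, d₁₂;
       0, 0, d₂₁, d₂₂].det = (a₁₁ * a₂₂ - a₁₂ * a₂₁) * (d₁₁ * d₂₂ - d₁₂ * d₂₁) := by
  rw [← Matrix.det_fin_two_of, ← Matrix.det_fin_two_of,
    ← Matrix.det_fromBlocks_zero₂₁ _ !![b₁₁, b₁₂; b₂₁, b₂₂],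
    ← Matrix.det_reindex_self finSumFinEquiv]
  congr 1
  ext r s
  fin_cases r <;> fin_cases s <;> rfl

section ReducedTrace

open QuaternionAlgebra (basisOneIJK)

variable {K : Type*} [CommRing K] {c₁ c₂ c₃ : K}

/-- The reduced trace `x + star x` of a quaternion algebra, as a linear form. In Mathlib's
three-parameter algebra `i * i = c₁ + c₂ * i`, so that `i` itself has reduced trace `c₂`. -/
def reducedTrace : ℍ[K,c₁,c₂,c₃] →ₗ[K] K :=
  (2 : K) • QuaternionAlgebra.reₗ c₁ c₂ c₃ + c₂ • QuaternionAlgebra.imIₗ c₁ c₂ c₃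

theorem reducedTrace_apply (x : ℍ[K,c₁,c₂,c₃]) : reducedTrace x = 2 * x.re + c₂ * x.imI :=
  rfl

/-- The trace form `(x, y) ↦ trd (x * y)`, whose Gram determinants are discriminants. -/
def reducedTraceForm : LinearMap.BilinForm K ℍ[K,c₁,c₂,c₃] :=
  (LinearMap.mul K ℍ[K,c₁,c₂,c₃]).compr₂ reducedTrace

theorem reducedTraceForm_apply (x y : ℍ[K,c₁,c₂,c₃]) :
    reducedTraceForm x y = reducedTrace (x * y) :=
  rfl

theorem toMatrix_reducedTraceForm :
    LinearMap.BilinForm.toMatrix (basisOneIJK c₁ c₂ c₃) reducedTraceForm =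
      !![2, c₂, 0, 0;
         c₂, 2 * c₁ + c₂ ^ 2, 0, 0;
         0, 0, 2 * c₃, c₂ * c₃;
         0, 0, c₂ * c₃, -2 * c₁ * c₃] := by
  ext r s
  fin_cases r <;> fin_cases s <;>
    simp [reducedTraceForm_apply, reducedTrace_apply, basisOneIJK] <;> ring

theorem det_toMatrix_reducedTraceForm :
    (LinearMap.BilinForm.toMatrix (basisOneIJK c₁ c₂ c₃) reducedTraceForm).det =
      -((c₂ ^ 2 + 4 * c₁) * c₃) ^ 2 := by
  rw [toMatrix_reducedTraceForm, det_fin_four_of_blockTriangular]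
  ring

theorem det_reducedTrace_mul (v : Fin 4 → ℍ[K,c₁,c₂,c₃]) :
    (Matrix.of fun r s => reducedTrace (v r * v s)).det =
      -((c₂ ^ 2 + 4 * c₁) * c₃) ^ 2 * ((basisOneIJK c₁ c₂ c₃).toMatrix v).det ^ 2 := by
  simp only [← reducedTraceForm_apply]
  rw [gram_eq_transpose_mul_toMatrix_mul _ (basisOneIJK c₁ c₂ c₃), Matrix.det_mul,
    Matrix.det_mul, Matrix.det_transpose, det_toMatrix_reducedTraceForm]
  ring

theorem toMatrix_one_i_self_i_mul (β : ℍ[K,c₁,c₂,c₃]) :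
    (basisOneIJK c₁ c₂ c₃).toMatrix ![1, ⟨0, 1, 0, 0⟩, β, ⟨0, 1, 0, 0⟩ * β] =
      !![1, 0, β.re, c₁ * β.imI;
         0, 1, β.imI, β.re + c₂ * β.imI;
         0, 0, β.imJ, c₁ * β.imK;
         0, 0, β.imK, β.imJ + c₂ * β.imK] := by
  ext r s
  fin_cases r <;> fin_cases s <;> simp [Module.Basis.toMatrix_apply]

theorem det_toMatrix_one_i_self_i_mul (β : ℍ[K,c₁,c₂,c₃]) :
    ((basisOneIJK c₁ c₂ c₃).toMatrix ![1, ⟨0, 1, 0, 0⟩, β, ⟨0, 1, 0, 0⟩ * β]).det =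
      β.imJ ^ 2 + c₂ * β.imJ * β.imK - c₁ * β.imK ^ 2 := by
  rw [toMatrix_one_i_self_i_mul, det_fin_four_of_blockTriangular]
  ring

-- The factor `4 ^ 2` is absorbed by the squared coordinate determinant, a form of degree 2 in `β`,
-- so the discriminant depends only on `2β` and no division by 2 is needed.
theorem det_two_mul_re_one_i_self_i_mul {a b x₂ : K} {β : ℍ[K,a,b]}
    (hJ : 2 * β.imJ = x₂) (hK : 2 * β.imK = 0) :
    let e : Fin 4 → ℍ[K,a,b] := ![1, ⟨0, 1, 0, 0⟩, β, ⟨0, 1, 0, 0⟩ * β]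
    (Matrix.of fun r s => 2 * (e r * e s).re).det = -(a ^ 2 * b ^ 2 * x₂ ^ 4) := by
  intro e
  calc (Matrix.of fun r s => 2 * (e r * e s).re).det
      = (Matrix.of fun r s => reducedTrace (e r * e s)).det := by
        simp only [reducedTrace_apply, zero_mul, add_zero]
    _ = -((0 ^ 2 + 4 * a) * b) ^ 2 * (β.imJ ^ 2 + 0 * β.imJ * β.imK - a * β.imK ^ 2) ^ 2 := by
        rw [det_reducedTrace_mul, det_toMatrix_one_i_self_i_mul]
    _ = -(a ^ 2 * b ^ 2 * ((2 * β.imJ) ^ 2 - a * (2 * β.imK) ^ 2) ^ 2) := by ring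
    _ = -(a ^ 2 * b ^ 2 * x₂ ^ 4) := by rw [hJ, hK]; ring

end ReducedTrace

theorem quaternion_span_discriminant_general {R K : Type*} [CommRing R] [CommRing K] [Algebra R K]
    (a b x₀ x₁ x₂ : R) (hx₂ : IsUnit x₂)
    (β : ℍ[K,algebraMap R K a,algebraMap R K b])
    (hβ : 2 • β = ⟨algebraMap R K x₀, algebraMap R K x₁, algebraMap R K x₂, 0⟩) :
    let i : ℍ[K,algebraMap R K a,algebraMap R K b] := ⟨0, 1, 0, 0⟩
    let j : ℍ[K,algebraMap R K a,algebraMap R K b] := ⟨0, 0, 1, 0⟩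
    let O := Submodule.span R {1, i, β, i * β}
    let e := ![1, i, β, i * β]
    let M : Matrix (Fin 4) (Fin 4) K := fun r s => 2 * (e r * e s).re
    j ∈ O ∧
    Submodule.span R {1, i, j, i * j} ≤ O ∧
    ∃ d : R, algebraMap R K d = M.det ∧ Ideal.span {d} = Ideal.span {a ^ 2 * b ^ 2} := by
  intro i j O e M
  have hi : i * i ∈ Submodule.span R {1, i} :=
    Submodule.mem_span_pair.mpr ⟨a, 0, by ext <;> simp [i, Algebra.algebraMap_eq_smul_one]⟩
  have h2β : (2 : R) • β = x₀ • 1 + x₁ • i + x₂ • j := by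
    rw [ofNat_smul_eq_nsmul, hβ]
    ext <;> simp [i, j, Algebra.algebraMap_eq_smul_one]
  have hj : j ∈ O := Submodule.span_mono (by grind) (mem_span_triple_of_smul_eq hx₂ h2β)
  refine ⟨hj, span_le_span_of_mul_self_mem hi hj, -(a ^ 2 * b ^ 2 * x₂ ^ 4), ?_, ?_⟩
  · have hJ : 2 * β.imJ = algebraMap R K x₂ := by
      simpa [two_nsmul, two_mul] using congrArg QuaternionAlgebra.imJ hβ
    have hK : 2 * β.imK = 0 := by
      simpa [two_nsmul, two_mul] using congrArg QuaternionAlgebra.imK hβ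
    rw [map_neg, map_mul, map_mul, map_pow, map_pow, map_pow]
    exact (det_two_mul_re_one_i_self_i_mul hJ hK).symm
  · rw [Ideal.span_singleton_neg, Ideal.span_singleton_mul_right_unit (hx₂.pow 4)]

/-- Let `k` be a number field with ring of integers `R = 𝓞 k`, let `a, b ∈ R`, and let
`A = (a,b / k)` be the quaternion algebra with `i² = a`, `j² = b`, `ij = -ji`.  Let
`x₀, x₁, x₂ ∈ R` satisfy `x₀² − a x₁² − b x₂² ∈ 4R` with `x₂` a unit of `R`, and set
`β = (1/2)(x₀ + x₁ i + x₂ j)` and `O = R⟨1, i, β, i β⟩`.  Then `j ∈ O`, so `O` contains the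
`R`-span of `{1, i, j, ij}`, and the determinant of the matrix of reduced traces
`trd (e_r * e_s)` for the basis `(1, i, β, i β)` generates the ideal `a² b² R`. -/
theorem quaternion_span_discriminant
    (k : Type*) [Field k] [NumberField k] (a b : 𝓞 k) (x₀ x₁ x₂ : 𝓞 k)
    (h : x₀ ^ 2 - a * x₁ ^ 2 - b * x₂ ^ 2 ∈ Ideal.span ({4} : Set (𝓞 k)))
    (hx₂ : IsUnit x₂) :
    let i : ℍ[k, (a : k), (b : k)] := ⟨0, 1, 0, 0⟩
    let j : ℍ[k, (a : k), (b : k)] := ⟨0, 0, 1, 0⟩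
    let β : ℍ[k, (a : k), (b : k)] :=
      (1 / 2 : k) • (((x₀ : k) : ℍ[k, (a : k), (b : k)]) + (x₁ : k) • i + (x₂ : k) • j)
    let O : Submodule (𝓞 k) ℍ[k, (a : k), (b : k)] :=
      Submodule.span (𝓞 k) ({1, i, β, i * β} : Set ℍ[k, (a : k), (b : k)])
    let e : Fin 4 → ℍ[k, (a : k), (b : k)] := ![1, i, β, i * β]
    let M : Matrix (Fin 4) (Fin 4) k := fun r s => 2 * (e r * e s).re
    j ∈ O ∧
    Submodule.span (𝓞 k) ({1, i, j, i * j} : Set ℍ[k, (a : k), (b : k)]) ≤ O ∧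
    ∃ d : 𝓞 k, (d : k) = M.det ∧
      Ideal.span ({d} : Set (𝓞 k)) = Ideal.span ({a ^ 2 * b ^ 2} : Set (𝓞 k)) := by
  exact quaternion_span_discriminant_general a b x₀ x₁ x₂ hx₂ _ <| by
    rw [two_nsmul, ← add_smul, add_halves, one_smul]
    ext <;> simp [-algebraMap_smul]
end

section
/- Let k be a number field with ring of integers R, and let a, b ∈ R be such that (i) the ideal generated by a and b is all of R, and (ii) there exist ã, b̃ ∈ R with ã² ≡ a (mod 4R) and b̃² ≡ b (mod 4R). Let A = (a,b / k) be the quaternion algebra over k with basis 1, i, j, ij satisfying i² = a, j² = b, ij = −ji, and let O' be the R-span of {1, i, j, ij}. Then there exist x₀, x₁ ∈ R such that, setting β = (1/2)(x₀ + x₁·i + j) ∈ (1/2)O', the R-submodule O of A spanned by {1, i, β, i·β} is a subring of A containing O', every element of O is integral over R, and the determinant of the 4×4 matrix (trd(e_r·e_s)) for the basis (e₁, e₂, e₃, e₄) = (1, i, β, i·β) generates the ideal a²·b²·R. -/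
/-!
Write `4 n = c² - b` and `β = (c + j) / 2`. Then `β² = c β - n`, `i² = a` and `i β = c i - β i`,
which are the relations of a quaternion algebra with structure constants `(-n, c, a)` in `R`.
The span of `1, i, β, iβ` is therefore the image of that algebra under a homomorphism
commuting with conjugation: it is a subring, and traces and norms of its elements come from `R`.
The reduced trace form has determinant `-16 a² b²` on `1, i, j, ij`, and the change of basis to
`1, i, β, iβ` has determinant `1 / 4`.
-/

open NumberField Quaternion

open QuaternionAlgebra (basisOneIJK)

section Span

variable {R A : Type*} [CommRing R] [Ring A] [Algebra R A] {c₁ c₂ c₃ : R}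

lemma i_mem_range_liftHom (q : QuaternionAlgebra.Basis A c₁ c₂ c₃) : q.i ∈ q.liftHom.range := by
  rw [q.range_liftHom]
  exact Algebra.subset_adjoin (by simp)

lemma j_mem_range_liftHom (q : QuaternionAlgebra.Basis A c₁ c₂ c₃) : q.j ∈ q.liftHom.range := by
  rw [q.range_liftHom]
  exact Algebra.subset_adjoin (by simp)

lemma span_one_j_i_j_mul_i_eq_range_liftHom (q : QuaternionAlgebra.Basis A c₁ c₂ c₃) :
    Submodule.span R {1, q.j, q.i, q.j * q.i} = Subalgebra.toSubmodule q.liftHom.range := by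
  apply le_antisymm
  · rw [Submodule.span_le]
    rintro _ (rfl | rfl | rfl | rfl)
    exacts [one_mem q.liftHom.range, j_mem_range_liftHom q, i_mem_range_liftHom q,
      mul_mem (S := Subalgebra R A) (j_mem_range_liftHom q) (i_mem_range_liftHom q)]
  · rintro _ ⟨x, rfl⟩
    have expand : q.liftHom x =
        x.re • 1 + (x.imJ + c₂ * x.imK) • q.j + x.imI • q.i + (-x.imK) • (q.j * q.i) := by
      simp only [q.liftHom_apply, QuaternionAlgebra.Basis.lift, q.j_mul_i,
        Algebra.algebraMap_eq_smul_one]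
      module
    change q.liftHom x ∈ _
    rw [expand]
    refine add_mem (add_mem (add_mem ?_ ?_) ?_) ?_ <;>
      exact Submodule.smul_mem _ _ (Submodule.subset_span (by simp))

end Span

section Conjugation

variable {R K : Type*} [CommRing R] [CommRing K] [Algebra R K] {c₁ c₂ c₃ : R} {d₁ d₂ d₃ : K}

lemma liftHom_star_of_star_eq (q : QuaternionAlgebra.Basis ℍ[K,d₁,d₂,d₃] c₁ c₂ c₃)
    (hi : star q.i = c₂ • 1 - q.i) (hj : star q.j = -q.j) (x : ℍ[R,c₁,c₂,c₃]) :
    q.liftHom (star x) = star (q.liftHom x) := by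
  have hk : star q.k = -q.k := by
    rw [← q.i_mul_j, star_mul, hi, hj, neg_mul, mul_sub, q.j_mul_i, q.i_mul_j, mul_smul_comm,
      mul_one]
    abel
  simp only [q.liftHom_apply, QuaternionAlgebra.Basis.lift, star_add,
    Algebra.algebraMap_eq_smul_one, QuaternionAlgebra.star_smul, star_one, hi, hj, hk,
    QuaternionAlgebra.re_star, QuaternionAlgebra.imI_star, QuaternionAlgebra.imJ_star,
    QuaternionAlgebra.imK_star]
  module

lemma two_mul_re_mem_range_of_map_star (φ : ℍ[R,c₁,c₂,c₃] →ₐ[R] ℍ[K,d₁,d₃])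
    (hφ : ∀ x, φ (star x) = star (φ x)) (x : ℍ[R,c₁,c₂,c₃]) :
    2 * (φ x).re ∈ (algebraMap R K).range := by
  refine ⟨2 * x.re + c₂ * x.imI, ?_⟩
  have h : φ x + star (φ x) = algebraMap R K (2 * x.re + c₂ * x.imI) := by
    rw [← hφ, ← map_add, x.self_add_star']
    exact φ.commutes _
  rw [(φ x).self_add_star', zero_mul, add_zero] at h
  exact congrArg QuaternionAlgebra.re h.symm

lemma re_mul_star_mem_range_of_map_star (φ : ℍ[R,c₁,c₂,c₃] →ₐ[R] ℍ[K,d₁,d₂,d₃])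
    (hφ : ∀ x, φ (star x) = star (φ x)) (x : ℍ[R,c₁,c₂,c₃]) :
    (φ x * star (φ x)).re ∈ (algebraMap R K).range := by
  refine ⟨(x * star x).re, ?_⟩
  have h : φ x * star (φ x) = algebraMap R K (x * star x).re := by
    rw [← hφ, ← map_mul, x.mul_star_eq_coe]
    exact φ.commutes _
  exact congrArg QuaternionAlgebra.re h.symm

end Conjugation

section Discriminant

variable {K : Type*} [CommRing K] {a b : K}

/-- The Gram matrix `(trd (e r * e s))` of a family of quaternions for the reduced trace form,
using `trd x = 2 * x.re`. -/
def reducedTraceMatrix {ι : Type*} (e : ι → ℍ[K,a,b]) : Matrix ι ι K :=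
  fun r s => 2 * (e r * e s).re

lemma reducedTraceMatrix_eq_transpose_mul_diagonal_mul {ι : Type*} (e : ι → ℍ[K,a,b]) :
    reducedTraceMatrix e = ((basisOneIJK a 0 b).toMatrix e).transpose *
      Matrix.diagonal ![2, 2 * a, 2 * b, -2 * a * b] * (basisOneIJK a 0 b).toMatrix e := by
  ext r s
  rw [Matrix.mul_apply]
  simp only [reducedTraceMatrix, QuaternionAlgebra.re_mul, Matrix.mul_diagonal,
    Matrix.transpose_apply, Module.Basis.toMatrix_apply, QuaternionAlgebra.coe_basisOneIJK_repr,
    Fin.sum_univ_four, Matrix.cons_val]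
  ring

lemma det_reducedTraceMatrix (e : Fin 4 → ℍ[K,a,b]) :
    (reducedTraceMatrix e).det =
      -16 * a ^ 2 * b ^ 2 * ((basisOneIJK a 0 b).toMatrix e).det ^ 2 := by
  rw [reducedTraceMatrix_eq_transpose_mul_diagonal_mul, Matrix.det_mul, Matrix.det_mul,
    Matrix.det_transpose, Matrix.det_diagonal, Fin.prod_univ_four]
  simp only [Matrix.cons_val]
  ring

end Discriminant

section HalfAddJ

variable {R K : Type*} [CommRing R] [Field K] [NeZero (2 : K)] [Algebra R K] {a b c n : R}

variable (K a) in
/-- The quaternionic basis of `(a, b / K)` whose first unit is `β = (c + j) / 2` and whose second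
unit is the standard `i`. Its structure constants `(-n, c, a)` lie in `R`. -/
def halfAddJBasis (h : c ^ 2 - b = 4 * n) :
    QuaternionAlgebra.Basis ℍ[K,algebraMap R K a,algebraMap R K b] (-n) c a where
  i := ⟨algebraMap R K c / 2, 0, 1 / 2, 0⟩
  j := ⟨0, 1, 0, 0⟩
  k := ⟨0, algebraMap R K c / 2, 0, -(1 / 2)⟩
  i_mul_i := by
    have hK : algebraMap R K c ^ 2 - algebraMap R K b = 4 * algebraMap R K n := by
      simpa only [map_sub, map_mul, map_pow, map_ofNat] using congrArg (algebraMap R K) h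
    ext <;> simp [Algebra.smul_def (A := K)]
    · field_simp
      linear_combination -hK
    · field_simp
      ring
  j_mul_j := by ext <;> simp [Algebra.smul_def (A := K)]
  i_mul_j := by ext <;> simp
  j_mul_i := by
    ext <;> simp [Algebra.smul_def (A := K)]
    field_simp
    norm_num

lemma halfAddJBasis_liftHom_star (h : c ^ 2 - b = 4 * n) (x : ℍ[R,-n,c,a]) :
    (halfAddJBasis K a h).liftHom (star x) = star ((halfAddJBasis K a h).liftHom x) := by
  refine liftHom_star_of_star_eq _ ?_ ?_ x <;>
    ext <;> simp [halfAddJBasis, Algebra.smul_def (A := K)]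
  field_simp
  ring

lemma imJ_unit_mem_range_liftHom_halfAddJBasis (h : c ^ 2 - b = 4 * n) :
    ⟨0, 0, 1, 0⟩ ∈ (halfAddJBasis K a h).liftHom.range := by
  refine ⟨⟨-c, 2, 0, 0⟩, ?_⟩
  have map_two : algebraMap R K 2 = 2 := map_ofNat _ 2
  ext <;> simp [QuaternionAlgebra.Basis.lift, halfAddJBasis, map_two,
    Algebra.algebraMap_eq_smul_one (A := ℍ[K,_,_]), Algebra.smul_def (A := K)]
  · field_simp
    ring
  · field_simp

lemma toMatrix_halfAddJBasis (h : c ^ 2 - b = 4 * n) :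
    (basisOneIJK (algebraMap R K a) 0 (algebraMap R K b)).toMatrix
      ![1, (halfAddJBasis K a h).j, (halfAddJBasis K a h).i,
        (halfAddJBasis K a h).j * (halfAddJBasis K a h).i] =
      !![1, 0, algebraMap R K c / 2, 0;
        0, 1, 0, algebraMap R K c / 2;
        0, 0, 1 / 2, 0;
        0, 0, 0, 1 / 2] := by
  ext r s
  fin_cases r <;> fin_cases s <;> simp [Module.Basis.toMatrix_apply, halfAddJBasis]

lemma det_reducedTraceMatrix_halfAddJBasis (h : c ^ 2 - b = 4 * n) :
    (reducedTraceMatrix ![1, (halfAddJBasis K a h).j, (halfAddJBasis K a h).i,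
      (halfAddJBasis K a h).j * (halfAddJBasis K a h).i]).det =
      algebraMap R K (-(a ^ 2 * b ^ 2)) := by
  rw [det_reducedTraceMatrix, toMatrix_halfAddJBasis, Matrix.det_of_isUpperTriangular]
  · simp only [Fin.prod_univ_four, Matrix.of_apply, Matrix.cons_val', Matrix.cons_val,
      map_neg, map_mul, map_pow]
    field_simp
    ring
  · intro r s hrs
    fin_cases r <;> fin_cases s <;> simp_all

end HalfAddJ

theorem exists_maximal_order_nice_symbol_general
    {R K : Type*} [CommRing R] [Field K] [NeZero (2 : K)] [Algebra R K] (a b : R)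
    (hb : ∃ b' : R, b' ^ 2 - b ∈ Ideal.span ({4} : Set R)) :
    ∃ x₀ x₁ : R,
      let i : ℍ[K,algebraMap R K a,algebraMap R K b] := ⟨0, 1, 0, 0⟩
      let j : ℍ[K,algebraMap R K a,algebraMap R K b] := ⟨0, 0, 1, 0⟩
      let β : ℍ[K,algebraMap R K a,algebraMap R K b] :=
        (1 / 2 : K) • ((algebraMap R K x₀ : ℍ[K,algebraMap R K a,algebraMap R K b]) +
          algebraMap R K x₁ • i + j)
      let O : Submodule R ℍ[K,algebraMap R K a,algebraMap R K b] :=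
        Submodule.span R {1, i, β, i * β}
      let O' : Submodule R ℍ[K,algebraMap R K a,algebraMap R K b] :=
        Submodule.span R {1, i, j, i * j}
      1 ∈ O ∧
      (∀ x ∈ O, ∀ y ∈ O, x * y ∈ O) ∧
      O' ≤ O ∧
      (∀ x ∈ O, 2 * x.re ∈ (algebraMap R K).range ∧ (x * star x).re ∈ (algebraMap R K).range) ∧
      ∃ d : R, algebraMap R K d = (reducedTraceMatrix ![1, i, β, i * β]).det ∧
        Ideal.span {d} = Ideal.span {a ^ 2 * b ^ 2} := by
  obtain ⟨c, hc⟩ := hb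
  obtain ⟨n, hn⟩ := Ideal.mem_span_singleton.mp hc
  refine ⟨c, 0, ?_⟩
  intro i j β O O'
  let q := halfAddJBasis K a hn
  have hβ : β = q.i := by
    ext <;> simp [β, i, j, q, halfAddJBasis, div_eq_inv_mul]
  have hO : O = Subalgebra.toSubmodule q.liftHom.range := by
    rw [← span_one_j_i_j_mul_i_eq_range_liftHom, ← hβ]
    rfl
  have i_mem : i ∈ q.liftHom.range := j_mem_range_liftHom q
  have j_mem : j ∈ q.liftHom.range := imJ_unit_mem_range_liftHom_halfAddJBasis hn
  rw [hO, hβ]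
  refine ⟨one_mem q.liftHom.range, fun x hx y hy => q.liftHom.range.mul_mem hx hy, ?_, ?_,
    -(a ^ 2 * b ^ 2), (det_reducedTraceMatrix_halfAddJBasis hn).symm,
    Ideal.span_singleton_neg _⟩
  · rw [Submodule.span_le]
    rintro _ (rfl | rfl | rfl | rfl)
    exacts [one_mem q.liftHom.range, i_mem, j_mem, q.liftHom.range.mul_mem i_mem j_mem]
  · rintro _ ⟨x, rfl⟩
    exact ⟨two_mul_re_mem_range_of_map_star _ (halfAddJBasis_liftHom_star hn) x,
      re_mul_star_mem_range_of_map_star _ (halfAddJBasis_liftHom_star hn) x⟩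

/-- Let `k` be a number field with ring of integers `R = 𝓞 k`, and let `a, b ∈ R` be coprime
and congruent to squares mod `4R`.  Let `A = (a,b / k)` be the quaternion algebra with
`i² = a`, `j² = b`, `ij = -ji`, and let `O'` be the `R`-span of `{1, i, j, ij}`.  Then there
are `x₀, x₁ ∈ R` such that, with `β = (1/2)(x₀ + x₁ i + j)`, the `R`-submodule `O` spanned by
`{1, i, β, i β}` is a subring of `A` containing `O'`, every element of `O` is integral over
`R`, and the determinant of the matrix of reduced traces of the basis `(1, i, β, i β)`
generates the ideal `a² b² R`. -/
theorem exists_maximal_order_nice_symbol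
    (k : Type*) [Field k] [NumberField k] (a b : 𝓞 k)
    (hab : Ideal.span ({a, b} : Set (𝓞 k)) = ⊤)
    (ha : ∃ a' : 𝓞 k, a' ^ 2 - a ∈ Ideal.span ({4} : Set (𝓞 k)))
    (hb : ∃ b' : 𝓞 k, b' ^ 2 - b ∈ Ideal.span ({4} : Set (𝓞 k))) :
    ∃ x₀ x₁ : 𝓞 k,
      let i : ℍ[k, (a : k), (b : k)] := ⟨0, 1, 0, 0⟩
      let j : ℍ[k, (a : k), (b : k)] := ⟨0, 0, 1, 0⟩
      let β : ℍ[k, (a : k), (b : k)] :=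
        (1 / 2 : k) • (((x₀ : k) : ℍ[k, (a : k), (b : k)]) + (x₁ : k) • i + j)
      let O : Submodule (𝓞 k) ℍ[k, (a : k), (b : k)] :=
        Submodule.span (𝓞 k) ({1, i, β, i * β} : Set ℍ[k, (a : k), (b : k)])
      let O' : Submodule (𝓞 k) ℍ[k, (a : k), (b : k)] :=
        Submodule.span (𝓞 k) ({1, i, j, i * j} : Set ℍ[k, (a : k), (b : k)])
      let e : Fin 4 → ℍ[k, (a : k), (b : k)] := ![1, i, β, i * β]
      let M : Matrix (Fin 4) (Fin 4) k := fun r s => 2 * (e r * e s).re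
      (1 : ℍ[k, (a : k), (b : k)]) ∈ O ∧
      (∀ x ∈ O, ∀ y ∈ O, x * y ∈ O) ∧
      O' ≤ O ∧
      (∀ x ∈ O, IsIntegral ℤ (2 * x.re) ∧ IsIntegral ℤ ((x * star x).re)) ∧
      ∃ d : 𝓞 k, (d : k) = M.det ∧
        Ideal.span ({d} : Set (𝓞 k)) = Ideal.span ({a ^ 2 * b ^ 2} : Set (𝓞 k)) := by
  obtain ⟨x₀, x₁, one_mem, mul_mem, le, mem_range, det⟩ :=
    exists_maximal_order_nice_symbol_general (K := k) a b hb
  have isIntegral {y : k} : y ∈ (algebraMap (𝓞 k) k).range → IsIntegral ℤ y :=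
    IsIntegralClosure.isIntegral_iff.mpr
  exact ⟨x₀, x₁, one_mem, mul_mem, le, fun x hx => (mem_range x hx).imp isIntegral isIntegral, det⟩
end

section
/- Let m₁ ≤ m₂ ≤ m₃ ≤ m₄ be integers with each mᵢ ≥ 2, and let M be a positive integer divisible by lcm(m₁, m₂, m₃, m₄) such that, in ℚ, (m₁−1)/m₁ + (m₂−1)/m₂ + (m₃−1)/m₃ + (m₄−1)/m₄ = 2/M + 2. Then the mᵢ take at most two distinct values; i.e., the set {m₁, m₂, m₃, m₄} has cardinality at most 2. -/
/-!
The integers `M / mᵢ` determine the `mᵢ` and are at most `⌊M / 2⌋`. The equation says that the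
rational numbers `M / 2 - M / mᵢ` add up to `2`, so the nonnegative integers `⌊M / 2⌋ - M / mᵢ` add
up to at most `2`, whereas three distinct values among them would contribute at least `0 + 1 + 2`.
-/

open Finset

theorem choose_two_card_image_le_sum {ι : Type*} {s : Finset ι} {f : ι → ℤ}
    (hf : ∀ i ∈ s, 0 ≤ f i) : ((#(s.image f)).choose 2 : ℤ) ≤ ∑ i ∈ s, f i :=
  have himage : ∀ x ∈ s.image f, 0 ≤ x := forall_mem_image.mpr hf
  calc
    ((#(s.image f)).choose 2 : ℤ) = ∑ k ∈ range #(s.image f), (0 + k : ℤ) := by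
      simp only [zero_add]
      rw [← Nat.cast_sum, sum_range_id, Nat.choose_two_right]
    _ ≤ ∑ x ∈ s.image f, x := sum_range_le_sum himage
    _ ≤ ∑ i ∈ s, f i := sum_image_le_of_nonneg himage

section

variable {M m : ℤ}

theorem ediv_injOn_setOf_dvd (hM : M ≠ 0) : Set.InjOn (M / ·) {m | m ∣ M} := by
  intro a ha b hb (hab : M / a = M / b)
  have hq : M / a ≠ 0 := fun h ↦ hM (by rw [← Int.ediv_mul_cancel ha, h, zero_mul])
  apply mul_left_cancel₀ hq
  calc M / a * a = M := Int.ediv_mul_cancel ha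
    _ = M / b * b := (Int.ediv_mul_cancel hb).symm
    _ = M / a * b := by rw [hab]

theorem ediv_le_ediv_of_nonneg_left {n : ℤ} (hM : 0 ≤ M) (hn : 0 < n) (hnm : n ≤ m) :
    M / m ≤ M / n := by
  have hm : 0 < m := hn.trans_le hnm
  rw [Int.le_ediv_iff_mul_le hn]
  calc M / m * n ≤ M / m * m := mul_le_mul_of_nonneg_left hnm (Int.ediv_nonneg hM hm.le)
    _ ≤ M := Int.ediv_mul_le M hm.ne'

theorem cast_ediv_two_sub_ediv_le (hm : m ≠ 0) (hdvd : m ∣ M) :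
    ((M / 2 - M / m : ℤ) : ℚ) ≤ M * (((m : ℚ) - 1) / m - 1 / 2) := by
  have hmQ : (m : ℚ) ≠ 0 := Int.cast_ne_zero.mpr hm
  have hfloor : ((M / 2 : ℤ) : ℚ) ≤ M / 2 := by
    rw [le_div_iff₀ two_pos]
    exact_mod_cast Int.ediv_mul_le M two_ne_zero
  calc ((M / 2 - M / m : ℤ) : ℚ) = (M / 2 : ℤ) - (M : ℚ) / m := by
        rw [Int.cast_sub, Int.cast_div hdvd hmQ]
    _ ≤ M / 2 - M / m := by gcongr
    _ = M * (((m : ℚ) - 1) / m - 1 / 2) := by field_simp; ring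

end

section

variable {ι : Type*} [Fintype ι] {m : ι → ℤ} {M : ℤ}

theorem choose_two_card_periods_le (hm : ∀ i, 2 ≤ m i) (hM : 0 < M) (hdvd : ∀ i, m i ∣ M) :
    ((#(univ.image m)).choose 2 : ℚ) ≤
      M * (∑ i, ((m i : ℚ) - 1) / m i - Fintype.card ι / 2) := by
  have hinj : Set.InjOn (fun a ↦ M / 2 - M / a) (univ.image m) := by
    intro a ha b hb hab
    have hsub : ∀ a ∈ univ.image m, a ∣ M := forall_mem_image.mpr fun i _ ↦ hdvd i
    exact ediv_injOn_setOf_dvd hM.ne' (hsub a ha) (hsub b hb) (sub_right_injective hab)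
  have hcount : ((#(univ.image m)).choose 2 : ℤ) ≤ ∑ i, (M / 2 - M / m i) := by
    rw [← card_image_of_injOn hinj, image_image]
    exact choose_two_card_image_le_sum fun i _ ↦
      sub_nonneg.mpr (ediv_le_ediv_of_nonneg_left hM.le two_pos (hm i))
  calc ((#(univ.image m)).choose 2 : ℚ) ≤ ∑ i, ((M / 2 - M / m i : ℤ) : ℚ) := by
        exact_mod_cast hcount
    _ ≤ ∑ i, M * (((m i : ℚ) - 1) / m i - 1 / 2) :=
        sum_le_sum fun i _ ↦ cast_ediv_two_sub_ediv_le (by linarith [hm i]) (hdvd i)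
    _ = M * (∑ i, ((m i : ℚ) - 1) / m i - Fintype.card ι / 2) := by
        rw [← mul_sum, sum_sub_distrib, sum_const, card_univ, nsmul_eq_mul, mul_one_div]

theorem at_most_two_distinct_periods_general (hm : ∀ i, 2 ≤ m i) (hM : 0 < M)
    (hdvd : ∀ i, m i ∣ M)
    (hlt : ∑ i, ((m i : ℚ) - 1) / m i < 3 / M + Fintype.card ι / 2) :
    #(univ.image m) ≤ 2 := by
  have hMQ : (0 : ℚ) < M := Int.cast_pos.mpr hM
  have hchoose : ((#(univ.image m)).choose 2 : ℚ) < 3 := calc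
    _ ≤ M * (∑ i, ((m i : ℚ) - 1) / m i - Fintype.card ι / 2) :=
      choose_two_card_periods_le hm hM hdvd
    _ < M * (3 / M) := mul_lt_mul_of_pos_left (sub_lt_iff_lt_add.mpr hlt) hMQ
    _ = 3 := mul_div_cancel₀ 3 hMQ.ne'
  by_contra! hcard
  exact (Nat.choose_le_choose 2 hcard).not_gt (by exact_mod_cast hchoose)

end

/-- If `2 ≤ m₁ ≤ m₂ ≤ m₃ ≤ m₄` are integers and `M` is a positive integer divisible by
`lcm (m₁, m₂, m₃, m₄)` with `∑ (mᵢ − 1)/mᵢ = 2/M + 2` in `ℚ`, then the `mᵢ` take at most two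
distinct values. -/
theorem at_most_two_distinct_periods
    (m₁ m₂ m₃ m₄ M : ℤ) (h₁ : 2 ≤ m₁) (h₂ : 2 ≤ m₂) (h₃ : 2 ≤ m₃) (h₄ : 2 ≤ m₄)
    (h₁₂ : m₁ ≤ m₂) (h₂₃ : m₂ ≤ m₃) (h₃₄ : m₃ ≤ m₄)
    (hM : 0 < M) (hdvd : (Int.lcm m₁ (Int.lcm m₂ (Int.lcm m₃ m₄)) : ℤ) ∣ M)
    (heq : ((m₁ : ℚ) - 1) / m₁ + ((m₂ : ℚ) - 1) / m₂ + ((m₃ : ℚ) - 1) / m₃ +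
        ((m₄ : ℚ) - 1) / m₄ = 2 / M + 2) :
    ({m₁, m₂, m₃, m₄} : Finset ℤ).card ≤ 2 := by
  have hlt : (2 : ℚ) / M + 2 < 3 / M + 4 / 2 := add_lt_add_of_lt_of_le
    (div_lt_div_of_pos_right (by norm_num) (Int.cast_pos.mpr hM)) (by norm_num)
  simp only [Int.coe_lcm_dvd_iff] at hdvd
  have hcard : #(univ.image ![m₁, m₂, m₃, m₄]) ≤ 2 :=
    at_most_two_distinct_periods_general (M := M) (by simp [Fin.forall_fin_succ, h₁, h₂, h₃, h₄]) hM
      (by simp [Fin.forall_fin_succ, hdvd]) (by simpa [Fin.sum_univ_four, heq] using hlt)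
  simpa [Fin.univ_succ] using hcard
end
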